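/- The expected number of (RVarLift)-redexes in a uniformly random λυ-term of size n satisfies E(X_n)/n → 1/384, where an (RVarLift)-redex is a subterm of the form (succ m)[⇑(s)]. -/

import Mathlib

open Finset Filter

mutual
inductive Tm : Type
  | idx : Nat → Tm
  | lam : Tm → Tm
  | app : Tm → Tm → Tm
  | clos : Tm → Subst → Tm
inductive Subst : Type
  | slash : Tm → Subst
  | lift : Subst → Subst
  | shift : Subst
end

mutual
/-- Natural size of a λυ-term: every constructor weighs 1; index n has size n+1. -/
def Tm.size : Tm → Nat
  | .idx n => n + 1
  | .lam a => Tm.size a + 1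
  | .app a b => Tm.size a + Tm.size b + 1
  | .clos a s => Tm.size a + Subst.size s + 1
/-- Natural size of an explicit substitution. -/
def Subst.size : Subst → Nat
  | .slash a => Tm.size a + 1
  | .lift s => Subst.size s + 1
  | .shift => 1
end

/-- Number of λυ-terms of size `n`. -/
noncomputable def tcount (n : ℕ) : ℕ := Nat.card {a : Tm // Tm.size a = n}

/-- Number of explicit substitutions of size `n`. -/
noncomputable def scount (n : ℕ) : ℕ := Nat.card {s : Subst // Subst.size s = n}

/-- Expected value of the statistic `f` on a uniformly random λυ-term of size `n`
(the statistic is assumed to be bounded by the size, so summing `k` up to `n` suffices). -/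
noncomputable def expectTm (f : Tm → ℕ) (n : ℕ) : ℝ :=
  (∑ k ∈ Finset.range (n + 1),
      (k : ℝ) * (Nat.card {a : Tm // Tm.size a = n ∧ f a = k} : ℝ)) / (tcount n : ℝ)

mutual
/-- Number of (rvarLift)-redexes occurring in a λυ-term. -/
def Tm.rvarLiftCount : Tm → ℕ
  | .idx _ => 0
  | .lam a => Tm.rvarLiftCount a
  | .app a b => Tm.rvarLiftCount a + Tm.rvarLiftCount b
  | .clos (.idx (_ + 1)) (.lift s) => Subst.rvarLiftCount s + 1
  | .clos a s => Tm.rvarLiftCount a + Subst.rvarLiftCount s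
/-- Number of (rvarLift)-redexes occurring in a substitution. -/
def Subst.rvarLiftCount : Subst → ℕ
  | .slash a => Tm.rvarLiftCount a
  | .lift s => Subst.rvarLiftCount s
  | .shift => 0
end

open Classical in
theorem lv_bnd (n : ℕ) : {a : Tm | a.size ≤ n}.Finite ∧ {s : Subst | s.size ≤ n}.Finite := by
  induction n with
  | zero =>
    constructor
    · convert Set.finite_empty
      ext a
      cases a <;> simp [Tm.size]
    · convert Set.finite_empty
      ext a
      cases a <;> simp [Subst.size]
  | succ n ih =>
    obtain ⟨hA, hB⟩ := ih
    constructor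
    · refine (((Set.finite_Iic n).image Tm.idx).union ((hA.image Tm.lam).union
        ((Set.Finite.image2 Tm.app hA hA).union (Set.Finite.image2 Tm.clos hA hB)))).subset ?_
      intro a ha
      cases a with
      | idx k => left; exact ⟨k, by simpa [Tm.size] using ha, rfl⟩
      | lam a => right; left; exact ⟨a, by simpa [Tm.size] using ha, rfl⟩
      | app a b =>
        right; right; left
        simp only [Tm.size, Set.mem_ofPred_eq] at ha
        exact ⟨a, by simp only [Set.mem_ofPred_eq]; omega, b, by simp only [Set.mem_ofPred_eq]; omega, rfl⟩
      | clos a b =>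
        right; right; right
        simp only [Tm.size, Set.mem_ofPred_eq] at ha
        exact ⟨a, by simp only [Set.mem_ofPred_eq]; omega, b, by simp only [Set.mem_ofPred_eq]; omega, rfl⟩
    · refine ((hA.image Subst.slash).union ((hB.image Subst.lift).union
        (Set.finite_singleton Subst.shift))).subset ?_
      intro a ha
      cases a with
      | slash a => left; exact ⟨a, by simpa [Subst.size] using ha, rfl⟩
      | lift a => right; left; exact ⟨a, by simpa [Subst.size] using ha, rfl⟩
      | shift => right; right; rfl

theorem lv_finT (n : ℕ) : {a : Tm | a.size = n}.Finite :=
  (lv_bnd n).1.subset fun _ h => le_of_eq h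
theorem lv_finS (n : ℕ) : {a : Subst | a.size = n}.Finite :=
  (lv_bnd n).2.subset fun _ h => le_of_eq h

noncomputable def lvT (n : ℕ) : Finset Tm := (lv_finT n).toFinset
noncomputable def lvS (n : ℕ) : Finset Subst := (lv_finS n).toFinset

theorem mem_lvT {n : ℕ} {a : Tm} : a ∈ lvT n ↔ a.size = n := by simp [lvT]
theorem mem_lvS {n : ℕ} {a : Subst} : a ∈ lvS n ↔ a.size = n := by simp [lvS]

theorem lvT_zero : lvT 0 = ∅ := by
  ext a; cases a <;> simp [mem_lvT, Tm.size]
theorem lvS_zero : lvS 0 = ∅ := by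
  ext a; cases a <;> simp [mem_lvS, Subst.size]

open Classical in
theorem sum_pairs {α β γ : Type} (n : ℕ) (A : ℕ → Finset α) (B : ℕ → Finset β) (sa : α → ℕ) (sb : β → ℕ)
    (hA : ∀ n a, a ∈ A n ↔ sa a = n) (hB : ∀ n b, b ∈ B n ↔ sb b = n)
    (c : α × β → γ) (hc : Function.Injective c) (f : γ → ℝ) :
    ∑ x ∈ (((antidiagonal n).biUnion fun p => A p.1 ×ˢ B p.2).image c), f x =
      ∑ p ∈ antidiagonal n, ∑ a ∈ A p.1, ∑ b ∈ B p.2, f (c (a, b)) := by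
  rw [sum_image (fun x _ y _ h => hc h), sum_biUnion]
  · refine sum_congr rfl fun p _ => ?_
    rw [sum_product]
  · intro p _ q _ hpq
    rw [Function.onFun, Finset.disjoint_left]
    rintro ⟨a, b⟩ h1 h2
    simp only [mem_product, hA, hB] at h1 h2
    exact hpq (Prod.ext (h1.1.symm.trans h2.1) (h1.2.symm.trans h2.2))

open Classical in
theorem sum_lvT_succ (f : Tm → ℝ) (n : ℕ) :
    ∑ a ∈ lvT (n + 1), f a = f (.idx n) + ∑ a ∈ lvT n, f (.lam a)
      + ∑ p ∈ antidiagonal n, ∑ a ∈ lvT p.1, ∑ b ∈ lvT p.2, f (.app a b)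
      + ∑ p ∈ antidiagonal n, ∑ a ∈ lvT p.1, ∑ b ∈ lvS p.2, f (.clos a b) := by
  have h : lvT (n + 1) = (({Tm.idx n} ∪ (lvT n).image Tm.lam) ∪
      ((antidiagonal n).biUnion fun p => lvT p.1 ×ˢ lvT p.2).image (fun x => Tm.app x.1 x.2)) ∪
      ((antidiagonal n).biUnion fun p => lvT p.1 ×ˢ lvS p.2).image (fun x => Tm.clos x.1 x.2) := by
    ext a
    cases a <;> simp [mem_lvT, mem_lvS, Tm.size]
  rw [h, sum_union, sum_union, sum_union, sum_singleton, sum_image,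
    sum_pairs n lvT lvT Tm.size Tm.size (fun _ _ => mem_lvT) (fun _ _ => mem_lvT),
    sum_pairs n lvT lvS Tm.size Subst.size (fun _ _ => mem_lvT) (fun _ _ => mem_lvS)]
  · rintro ⟨a, b⟩ ⟨c, d⟩ h; simpa using h
  · rintro ⟨a, b⟩ ⟨c, d⟩ h; simpa using h
  · intro a _ b _ h; simpa using h
  all_goals
    rw [Finset.disjoint_left]
    intro a
    cases a <;> simp

open Classical in
theorem sum_lvS_succ (f : Subst → ℝ) (n : ℕ) :
    ∑ a ∈ lvS (n + 1), f a = ∑ a ∈ lvT n, f (.slash a) + ∑ a ∈ lvS n, f (.lift a)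
      + if n = 0 then f .shift else 0 := by
  have h : lvS (n + 1) = ((lvT n).image Subst.slash ∪ (lvS n).image Subst.lift) ∪
      (if n = 0 then {Subst.shift} else ∅) := by
    ext a
    cases a <;> by_cases hn : n = 0 <;> simp [mem_lvT, mem_lvS, Subst.size, hn]
  rw [h, sum_union, sum_union, sum_image, sum_image]
  · split_ifs <;> simp
  · intro a _ b _ h; simpa using h
  · intro a _ b _ h; simpa using h
  all_goals
    rw [Finset.disjoint_left]
    intro a
    by_cases hn : n = 0 <;> cases a <;> simp [hn]

def lvSucc : Tm → ℝ
  | .idx (_ + 1) => 1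
  | _ => 0
def lvLift : Subst → ℝ
  | .lift _ => 1
  | _ => 0

theorem rv_clos (a : Tm) (s : Subst) : ((Tm.clos a s).rvarLiftCount : ℝ) =
    a.rvarLiftCount + s.rvarLiftCount + lvSucc a * lvLift s := by
  rcases a with (_ | k) | a | a | a <;> rcases s with a | s | _ <;>
    simp [Tm.rvarLiftCount, Subst.rvarLiftCount, lvSucc, lvLift]

mutual
theorem rv_leT : ∀ a : Tm, a.rvarLiftCount ≤ a.size
  | .idx _ => by simp [Tm.rvarLiftCount]
  | .lam a => by have := rv_leT a; simp only [Tm.rvarLiftCount, Tm.size]; omega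
  | .app a b => by
    have := rv_leT a
    have := rv_leT b
    simp only [Tm.rvarLiftCount, Tm.size]; omega
  | .clos a s => by
    have h1 := rv_leT a
    have h2 := rv_leS s
    have h3 : (Tm.clos a s).rvarLiftCount ≤ a.rvarLiftCount + s.rvarLiftCount + 1 := by
      rcases a with (_ | k) | a | a | a <;> rcases s with a | s | _ <;>
        simp [Tm.rvarLiftCount, Subst.rvarLiftCount]
    simp only [Tm.size]; omega
theorem rv_leS : ∀ a : Subst, a.rvarLiftCount ≤ a.size
  | .slash a => by have := rv_leT a; simp only [Subst.rvarLiftCount, Subst.size]; omega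
  | .lift a => by have := rv_leS a; simp only [Subst.rvarLiftCount, Subst.size]; omega
  | .shift => by simp [Subst.rvarLiftCount]
end

open PowerSeries in
noncomputable def gT : PowerSeries ℝ := PowerSeries.mk fun n => ∑ _a ∈ lvT n, 1
noncomputable def gS : PowerSeries ℝ := PowerSeries.mk fun n => ∑ _a ∈ lvS n, 1
noncomputable def gR : PowerSeries ℝ := PowerSeries.mk fun n => ∑ a ∈ lvT n, (a.rvarLiftCount : ℝ)
noncomputable def gQ : PowerSeries ℝ := PowerSeries.mk fun n => ∑ a ∈ lvS n, (a.rvarLiftCount : ℝ)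
noncomputable def gU : PowerSeries ℝ := PowerSeries.mk fun n => ∑ a ∈ lvT n, lvSucc a
noncomputable def gV : PowerSeries ℝ := PowerSeries.mk fun n => ∑ a ∈ lvS n, lvLift a
noncomputable def gO : PowerSeries ℝ := PowerSeries.mk fun _ => 1

open PowerSeries

theorem eqO : gO * (1 - X) = 1 := by
  exact PowerSeries.mk_one_mul_one_sub_eq_one ℝ

theorem eqT : gT = X * (gO + gT + gT * gT + gT * gS) := by
  ext n
  cases n with
  | zero => simp [gT, lvT_zero]
  | succ n =>
    rw [coeff_succ_X_mul]
    simp only [gT, gS, gO, map_add, coeff_mk, coeff_mul, sum_lvT_succ]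
    simp

theorem eqS : gS = X * (gT + gS + 1) := by
  ext n
  cases n with
  | zero => simp [gS, lvS_zero]
  | succ n =>
    rw [coeff_succ_X_mul]
    simp only [gT, gS, map_add, coeff_mk, sum_lvS_succ, coeff_one]

theorem eqQ : gQ = X * (gR + gQ) := by
  ext n
  cases n with
  | zero => simp [gQ, lvS_zero]
  | succ n =>
    rw [coeff_succ_X_mul]
    simp only [gQ, gR, map_add, coeff_mk, sum_lvS_succ]
    simp [Subst.rvarLiftCount]

theorem eqV : gV = X * gS := by
  ext n
  cases n with
  | zero => simp [gV, lvS_zero]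
  | succ n =>
    rw [coeff_succ_X_mul]
    simp only [gV, gS, coeff_mk, sum_lvS_succ]
    simp [lvLift]

theorem eqU : gU = X * (X * gO) := by
  ext n
  cases n with
  | zero => simp [gU, lvT_zero]
  | succ n =>
    rw [coeff_succ_X_mul]
    simp only [gU, gO, coeff_mk, sum_lvT_succ]
    cases n with
    | zero => simp [lvSucc]
    | succ n => rw [coeff_succ_X_mul]; simp [lvSucc]

theorem eqR : gR = X * (gR + gR * gT + gT * gR + gR * gS + gT * gQ + gU * gV) := by
  ext n
  cases n with
  | zero => simp [gR, lvT_zero]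
  | succ n =>
    rw [coeff_succ_X_mul]
    simp only [gT, gS, gR, gQ, gU, gV, map_add, coeff_mk, coeff_mul, sum_lvT_succ, rv_clos]
    simp only [Tm.rvarLiftCount, Finset.sum_mul_sum, Nat.cast_add, Finset.sum_add_distrib, mul_one, one_mul]
    simp
    ring

theorem eqT' : gT = X * (1 + gT) ^ 2 := by
  linear_combination (1 - X : PowerSeries ℝ) * eqT + X * eqO + X * gT * eqS

theorem eqR' : gR * (1 - 2 * (X * (1 + gT))) * (1 - X) = X ^ 5 * (1 + gT) := by
  have hR := eqR
  rw [eqU, eqV] at hR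
  linear_combination (1 - X : PowerSeries ℝ)^2 * hR + (1 - X) * X * gR * eqS + (1 - X) * X * gT * eqQ
    + X^4 * gS * (1 - X) * eqO + X^4 * eqS

theorem cat_eq : 1 + gT = PowerSeries.map (Nat.castRingHom ℝ) catalanSeries := by
  have h1 : PowerSeries.map (Nat.castRingHom ℝ) catalanSeries =
      1 + X * (PowerSeries.map (Nat.castRingHom ℝ) catalanSeries) ^ 2 := by
    conv_lhs => rw [← catalanSeries_sq_mul_X_add_one]
    simp
    ring
  set K := PowerSeries.map (Nat.castRingHom ℝ) catalanSeries
  have h2 : (1 + gT - K) * (1 - X * (1 + gT + K)) = 0 := by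
    linear_combination eqT' - h1
  rcases mul_eq_zero.1 h2 with h | h
  · exact sub_eq_zero.1 h
  · have := congrArg constantCoeff h
    simp at this

theorem coeff_gT (n : ℕ) (hn : n ≠ 0) : coeff n gT = (catalan n : ℝ) := by
  have := congrArg (coeff n) cat_eq
  simpa [coeff_one, hn] using this

noncomputable def lvc (m : ℕ) : ℝ := ((m + 1).centralBinom : ℝ) / 2

noncomputable def gE : PowerSeries ℝ := PowerSeries.mk lvc

theorem lv_deriv_eq : derivative ℝ (X * (1 + gT)) = 1 + 2 * (X * gE) := by
  ext n
  have hc : coeff n (derivative ℝ (X * (1 + gT))) = (n.centralBinom : ℝ) := by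
    rw [coeff_derivative, coeff_succ_X_mul, cat_eq]
    have := succ_mul_catalan_eq_centralBinom n
    rw [← this]
    simp
    ring
  rw [hc]
  have h2 : (2 : PowerSeries ℝ) = C 2 := (map_ofNat (C (R := ℝ)) 2).symm
  rw [h2, map_add, coeff_C_mul]
  cases n with
  | zero => simp
  | succ n =>
    rw [coeff_succ_X_mul]
    simp [gE, lvc, coeff_one]
    ring

theorem lv_deriv_mul : (1 + 2 * (X * gE)) * (1 - 2 * (X * (1 + gT))) = 1 := by
  have h : X * (1 + gT) = X + (X * (1 + gT)) * (X * (1 + gT)) := by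
    linear_combination X * eqT'
  have h2 := congrArg (derivative ℝ) h
  rw [map_add, Derivation.leibniz (derivative ℝ) (X * (1 + gT)) (X * (1 + gT)), lv_deriv_eq, derivative_X] at h2
  simp only [smul_eq_mul] at h2
  linear_combination h2

theorem gR_eq : gR = X ^ 5 * (gE * gO) := by
  have hX : (X : PowerSeries ℝ) ≠ 0 := X_ne_zero
  have h2 : (2 : PowerSeries ℝ) ≠ 0 := fun h => by
    have := congrArg (constantCoeff (R := ℝ)) h
    rw [map_ofNat (constantCoeff (R := ℝ)) 2] at this
    simp at this
  have hE : (1 - 2 * (X * (1 + gT))) * gE = 1 + gT := by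
    apply mul_left_cancel₀ hX
    apply mul_left_cancel₀ h2
    linear_combination lv_deriv_mul
  have h3 : gR * (1 - X) = X ^ 5 * gE := by
    linear_combination (1 + 2 * (X * gE)) * eqR' - X ^ 5 * (1 + 2 * (X * gE)) * hE
      + (X ^ 5 * gE - gR * (1 - X)) * lv_deriv_mul
  linear_combination gO * h3 - gR * eqO

theorem coeff_gR (n : ℕ) : coeff (n + 5) gR = ∑ k ∈ range (n + 1), lvc k := by
  rw [gR_eq, coeff_X_pow_mul, coeff_mul, Finset.Nat.sum_antidiagonal_eq_sum_range_succ_mk]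
  simp [gE, gO]

theorem expect_eq (n : ℕ) (hn : n ≠ 0) :
    expectTm Tm.rvarLiftCount n = coeff n gR / (catalan n : ℝ) := by
  classical
  have ht : (tcount n : ℝ) = catalan n := by
    rw [← coeff_gT n hn, tcount, Nat.subtype_card (lvT n) (fun _ => mem_lvT)]
    simp [gT]
  rw [expectTm, ht]
  congr 1
  simp only [gR, coeff_mk]
  rw [← Finset.sum_fiberwise_of_maps_to (s := lvT n) (t := range (n + 1))
    (g := Tm.rvarLiftCount)]
  · refine Finset.sum_congr rfl fun k _ => ?_
    rw [Nat.subtype_card ((lvT n).filter fun a => a.rvarLiftCount = k)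
      (fun a => by rw [mem_filter, mem_lvT])]
    rw [Finset.sum_congr rfl (g := fun _ => (k : ℝ))
      (fun a ha => by rw [(mem_filter.1 ha).2])]
    simp [mul_comm]
  · intro a ha
    have := rv_leT a
    rw [mem_lvT] at ha
    simp only [mem_range]; omega

theorem cb_rec (n : ℕ) : ((n : ℝ) + 1) * ((n + 1).centralBinom : ℝ) =
    2 * (2 * n + 1) * (n.centralBinom : ℝ) := by
  exact_mod_cast Nat.succ_mul_centralBinom_succ n

theorem lvc_pos (m : ℕ) : 0 < lvc m := by
  have := Nat.centralBinom_pos (m + 1)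
  unfold lvc; positivity

theorem lvc_rec (m : ℕ) : ((m : ℝ) + 2) * lvc (m + 1) = (4 * m + 6) * lvc m := by
  have := cb_rec (m + 1)
  push_cast at this
  unfold lvc
  linear_combination this / 2

theorem sum_bound (m : ℕ) : |∑ k ∈ range m, lvc k - lvc m / 3| ≤ lvc m / (m + 1) := by
  induction m with
  | zero =>
    have := lvc_pos 0
    simp
    rw [abs_of_pos (by linarith)]; linarith
  | succ m ih =>
    have h0 := lvc_pos m
    have hr := lvc_rec m
    have hm : (0 : ℝ) ≤ m := Nat.cast_nonneg m
    have he : lvc (m + 1) = (4 * m + 6) * lvc m / (m + 2) := by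
      field_simp; linear_combination hr
    rw [sum_range_succ, he]
    have hsplit : ∑ k ∈ range m, lvc k + lvc m - (4 * m + 6) * lvc m / (m + 2) / 3 =
        (∑ k ∈ range m, lvc k - lvc m / 3) + 2 / 3 * lvc m / (m + 2) := by
      field_simp; ring
    rw [hsplit]
    refine (abs_add_le _ _).trans ?_
    rw [abs_of_pos (show (0 : ℝ) < 2 / 3 * lvc m / (m + 2) by positivity)]
    refine (add_le_add_left ih _).trans ?_
    push_cast
    rw [← sub_nonneg]
    have : (4 * m + 6) * lvc m / (m + 2) / ((m : ℝ) + 1 + 1) - (lvc m / (m + 1) + 2 / 3 * lvc m / (m + 2))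
      = lvc m * ((4 * m + 6) * (m + 1) - (m + 2)^2 - 2 / 3 * (m + 2) * (m + 1)) / ((m + 2)^2 * (m + 1)) := by
      field_simp; ring
    rw [this]
    apply div_nonneg (mul_nonneg h0.le _) (by positivity)
    nlinarith

theorem lim_u : Tendsto (fun m : ℕ => (∑ k ∈ range m, lvc k) / lvc m) atTop (nhds (1 / 3)) := by
  rw [tendsto_iff_norm_sub_tendsto_zero]
  refine squeeze_zero (fun _ => norm_nonneg _) (fun m => ?_) tendsto_one_div_add_atTop_nhds_zero_nat
  have h0 := lvc_pos m
  have h := sum_bound m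
  have : (∑ k ∈ range m, lvc k) / lvc m - 1 / 3 = (∑ k ∈ range m, lvc k - lvc m / 3) / lvc m := by
    field_simp
  rw [this, norm_div, Real.norm_eq_abs, Real.norm_eq_abs, abs_of_pos h0, div_le_iff₀ h0]
  calc _ ≤ _ := h
    _ = _ := by ring

theorem lim_lin (a b c d : ℝ) (hc : c ≠ 0) :
    Tendsto (fun m : ℕ => (a * m + b) / (c * m + d)) atTop (nhds (a / c)) := by
  have h := tendsto_inv_atTop_nhds_zero_nat (𝕜 := ℝ)
  have h2 : Tendsto (fun m : ℕ => (a + b * (m : ℝ)⁻¹) / (c + d * (m : ℝ)⁻¹)) atTop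
      (nhds ((a + b * 0) / (c + d * 0))) :=
    ((h.const_mul b).const_add a).div ((h.const_mul d).const_add c) (by simpa using hc)
  simp only [mul_zero, add_zero] at h2
  refine h2.congr' ?_
  filter_upwards [eventually_ne_atTop 0] with m hm
  have hm : (m : ℝ) ≠ 0 := by exact_mod_cast hm
  rw [← mul_div_mul_right _ _ hm]
  congr 1 <;> field_simp

theorem ratio_eq (m : ℕ) : lvc m / (((m + 4 : ℕ) : ℝ) * (catalan (m + 4) : ℝ)) =
    1 / 2 * ((1 * m + 5) / (1 * m + 4)) * ((1 * m + 2) / (4 * m + 6)) * ((1 * m + 3) / (4 * m + 10))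
      * ((1 * m + 4) / (4 * m + 14)) := by
  have h0 := lvc_pos m
  have h1 := lvc_rec m
  have h2 := lvc_rec (m + 1)
  have h3 := lvc_rec (m + 2)
  have hc : ((m : ℝ) + 5) * catalan (m + 4) = 2 * lvc (m + 3) := by
    have : ((m + 4 + 1 : ℕ) : ℝ) * catalan (m + 4) = ((m + 4).centralBinom : ℝ) := by
      exact_mod_cast succ_mul_catalan_eq_centralBinom (m + 4)
    unfold lvc
    push_cast at this
    linear_combination this
  push_cast at h1 h2 h3
  have e1 : lvc (m + 1) = (4 * m + 6) * lvc m / (m + 2) := by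
    field_simp; linear_combination h1
  have e2 : lvc (m + 2) = (4 * m + 10) * lvc (m + 1) / (m + 3) := by
    field_simp; linear_combination h2
  have e3 : lvc (m + 3) = (4 * m + 14) * lvc (m + 2) / (m + 4) := by
    field_simp; linear_combination h3
  have e4 : (catalan (m + 4) : ℝ) = 2 * lvc (m + 3) / (m + 5) := by
    field_simp; linear_combination hc
  rw [e4, e3, e2, e1]
  push_cast
  field_simp

/-- the expected number of (RVarLift)-redexes (subterms (succ m)[⇑(s)])
per size n tends to 1/384. -/
theorem stmt18 :
    Tendsto (fun n : ℕ => expectTm Tm.rvarLiftCount n / (n : ℝ)) atTop (nhds (1 / 384)) := by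
  rw [← tendsto_add_atTop_iff_nat 5]
  have key : Tendsto (fun m : ℕ => ((∑ k ∈ range m, lvc k) / lvc m) *
      (lvc m / (((m + 4 : ℕ) : ℝ) * (catalan (m + 4) : ℝ)))) atTop (nhds (1 / 384)) := by
    simp only [ratio_eq]
    have := lim_u.mul (((((lim_lin 1 5 1 4 one_ne_zero).const_mul (1 / 2)).mul
      (lim_lin 1 2 4 6 four_ne_zero)).mul (lim_lin 1 3 4 10 four_ne_zero)).mul
      (lim_lin 1 4 4 14 four_ne_zero))
    convert this using 2
    norm_num
  refine ((tendsto_add_atTop_iff_nat 1).2 key).congr fun n => ?_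
  rw [expect_eq _ (by omega), coeff_gR]
  have h0 := (lvc_pos (n + 1)).ne'
  rw [div_mul_div_cancel₀ h0, div_div]
  congr 1
  rw [mul_comm]
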